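/- The function γ ↦ 1/(γ·(1/(1−γ) − 1 + γ)) is strictly decreasing on (0,1), and the function γ ↦ −log(1 − 2γ)/(1/(1−γ) − 1 + γ) is strictly increasing on (0, 1/2). -/

import Mathlib

/-- The function `γ ↦ 1/(γ·(1/(1−γ) − 1 + γ))` is strictly decreasing on
`(0,1)`, and the function `γ ↦ −log(1 − 2γ)/(1/(1−γ) − 1 + γ)` is strictly increasing on
`(0,1/2)`. -/
theorem criteria_monotonicity :
    StrictAntiOn (fun γ : ℝ => 1 / (γ * (1 / (1 - γ) - 1 + γ))) (Set.Ioo (0 : ℝ) 1) ∧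
      StrictMonoOn (fun γ : ℝ => -Real.log (1 - 2 * γ) / (1 / (1 - γ) - 1 + γ))
        (Set.Ioo (0 : ℝ) (1 / 2)) := by
  have hpos : ∀ x : ℝ, 0 < x → x < 1 → 0 < 1 / (1 - x) - 1 + x := by
    intro x h0 h1
    have : 1 < 1 / (1 - x) := by
      rw [lt_div_iff₀ (by linarith)]; linarith
    linarith
  constructor
  · rintro x ⟨hx0, hx1⟩ y ⟨hy0, hy1⟩ hxy
    have hx := hpos x hx0 hx1
    have h1 : 1 / (1 - x) < 1 / (1 - y) :=
      one_div_lt_one_div_of_lt (by linarith) (by linarith)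
    refine one_div_lt_one_div_of_lt (mul_pos hx0 hx) ?_
    exact mul_lt_mul'' hxy (by linarith) hx0.le hx.le
  · have hd : ∀ x ∈ Set.Ioo (0 : ℝ) (1 / 2),
        HasDerivAt (fun γ : ℝ => -Real.log (1 - 2 * γ) / (1 / (1 - γ) - 1 + γ))
          (((2 / (1 - 2 * x)) * (1 / (1 - x) - 1 + x) -
            (-Real.log (1 - 2 * x)) * (1 / (1 - x) ^ 2 + 1)) / (1 / (1 - x) - 1 + x) ^ 2) x := by
      rintro x ⟨h0, h1⟩
      have hn : HasDerivAt (fun γ : ℝ => -Real.log (1 - 2 * γ)) (2 / (1 - 2 * x)) x := by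
        have h := ((((hasDerivAt_id x).const_mul 2).const_sub 1).log
          (by simp only [id]; linarith)).neg
        refine HasDerivAt.congr_deriv (f := fun γ : ℝ => -Real.log (1 - 2 * γ)) h ?_
        simp only [id]; ring
      have hh : HasDerivAt (fun γ : ℝ => 1 / (1 - γ) - 1 + γ) (1 / (1 - x) ^ 2 + 1) x := by
        have h := ((((hasDerivAt_id x).const_sub 1).inv
          (by simp only [id]; linarith)).sub_const 1).add (hasDerivAt_id x)
        have e : (fun γ : ℝ => 1 / (1 - γ) - 1 + γ) = fun γ : ℝ => (1 - γ)⁻¹ - 1 + γ := by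
          funext γ; rw [one_div]
        rw [e]
        refine HasDerivAt.congr_deriv (f := fun γ : ℝ => (1 - γ)⁻¹ - 1 + γ) h ?_
        simp
      exact hn.div hh (hpos x h0 (by linarith)).ne'
    apply strictMonoOn_of_deriv_pos (convex_Ioo _ _)
    · exact fun x hx => (hd x hx).continuousAt.continuousWithinAt
    · intro x hx
      rw [interior_Ioo] at hx
      rw [(hd x hx).deriv]
      obtain ⟨h0, h1⟩ := hx
      have hp := hpos x h0 (by linarith)
      refine div_pos ?_ (pow_pos hp 2)
      have a : 0 < 1 - 2 * x := by linarith
      have b : 0 < 1 - x := by linarith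
      have hL : -Real.log (1 - 2 * x) ≤ 2 * x * (1 - x) / (1 - 2 * x) := by
        have hl : 0 ≤ Real.log (1 - 2 * x)⁻¹ :=
          Real.log_nonneg ((one_le_inv₀ a).2 (by linarith))
        have h := Real.self_le_sinh_iff.2 hl
        rw [Real.sinh_log (inv_pos.2 a), Real.log_inv, inv_inv] at h
        refine h.trans (le_of_eq ?_)
        field_simp
        ring
      have hm := mul_le_mul_of_nonneg_right hL (by positivity : 0 ≤ 1 / (1 - x) ^ 2 + 1)
      have key : 2 / (1 - 2 * x) * (1 / (1 - x) - 1 + x)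
          - 2 * x * (1 - x) / (1 - 2 * x) * (1 / (1 - x) ^ 2 + 1)
          = 2 * x ^ 2 / (1 - 2 * x) / (1 - x) * (1 - x) := by
        field_simp
        ring
      have : 0 < 2 * x ^ 2 / (1 - 2 * x) / (1 - x) * (1 - x) := by positivity
      linarith
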